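/- Let K be a field, σ an automorphism of K, R = K[t;σ] the twisted polynomial ring with multiplication ta = σ(a)t, and f(t) = t^m − Σ_{i=0}^{m−1} a_i t^i ∈ R a monic polynomial of degree m ≥ 2 that is not right invariant. Then an element d ∈ K lies in the right nucleus of the Petit algebra S_f = R/Rf if and only if σ^m(d) a_i = a_i σ^i(d) for all i = 0, 1, …, m−1. -/

import Mathlib

open Polynomial

/-- Skew (twisted) multiplication on polynomials over `K`, representing the
multiplication of the twisted polynomial ring `K[t;σ]` with `t·a = σ(a)·t`:
`(a t^i)·(b t^j) = a σ^i(b) t^{i+j}`. -/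
noncomputable def sMul {K : Type} [Field K] (σ : K ≃+* K) (p q : K[X]) : K[X] :=
  p.sum fun i a => C a * (q.map ((σ ^ i : K ≃+* K) : K →+* K)) * X ^ i

/-- `f` is right invariant in `K[t;σ]`: `f·g ∈ R·f` for all `g`. -/
def RightInvariant {K : Type} [Field K] (σ : K ≃+* K) (f : K[X]) : Prop :=
  ∀ g : K[X], ∃ q : K[X], sMul σ f g = sMul σ q f

/-- Membership in the eigenring of `f`, i.e. the right nucleus of the Petit
algebra `S_f = K[t;σ]/K[t;σ]f` (for `f` not right invariant):
`{g | deg g < deg f ∧ f·g ∈ R·f}`. -/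
def InEigenring {K : Type} [Field K] (σ : K ≃+* K) (f g : K[X]) : Prop :=
  g.degree < f.degree ∧ ∃ q : K[X], sMul σ f g = sMul σ q f

/-- Remainder of right division by `f` in `K[t;σ]` (Petit multiplication in
`S_f` is `g ∘ h = (g·h) mod_r f`). -/
noncomputable def modRight {K : Type} [Field K] (σ : K ≃+* K) (f g : K[X]) : K[X] := by
  classical
  exact if h : ∃ r : K[X], r.degree < f.degree ∧ ∃ q : K[X], g = sMul σ q f + r
    then h.choose else 0

/-!
Degrees add in `K[t;σ]`, so if `f * d = q * f` with `d` constant and `f ≠ 0`, then `q` is constant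
too. Comparing leading coefficients forces `q = σ ^ m d` with `m = deg f`, and the relations are the
comparison of the remaining coefficients.
-/

section SkewMultiplication

variable {K : Type} [Field K] (σ : K ≃+* K)

theorem sMul_C_left (c : K) (q : K[X]) : sMul σ (C c) q = C c * q := by
  have map_pow_zero : q.map ((σ ^ 0 : K ≃+* K) : K →+* K) = q := q.map_id
  rw [sMul, sum_C_index (by rw [C_0, zero_mul, zero_mul]), map_pow_zero, pow_zero, mul_one]

theorem coeff_sMul_C (p : K[X]) (d : K) (n : ℕ) :
    (sMul σ p (C d)).coeff n = p.coeff n * (σ ^ n) d := by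
  simp only [sMul, sum_def, finsetSum_coeff, map_C, ← C_mul, coeff_C_mul_X_pow]
  rw [Finset.sum_ite_eq]
  split_ifs with hn
  · rfl
  · rw [notMem_support_iff.mp hn, zero_mul]

theorem natDegree_sMul_C_le (p : K[X]) (d : K) : (sMul σ p (C d)).natDegree ≤ p.natDegree :=
  natDegree_le_iff_coeff_eq_zero.mpr fun n hn => by
    rw [coeff_sMul_C, coeff_eq_zero_of_natDegree_lt hn, zero_mul]

theorem coeff_sMul_natDegree_add_natDegree (p q : K[X]) :
    (sMul σ p q).coeff (p.natDegree + q.natDegree) =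
      p.leadingCoeff * (σ ^ p.natDegree) q.leadingCoeff := by
  simp only [sMul, sum_def, finsetSum_coeff, mul_assoc, coeff_C_mul]
  rw [Finset.sum_eq_single p.natDegree]
  · rw [add_comm, coeff_mul_X_pow, coeff_map]
    rfl
  · intro i hi hne
    have hlt : i < p.natDegree := lt_of_le_of_ne (le_natDegree_of_mem_supp i hi) hne
    rw [coeff_mul_X_pow', if_pos (by lia), coeff_map,
      coeff_eq_zero_of_natDegree_lt (by lia : q.natDegree < _), map_zero, mul_zero]
  · intro h
    rw [notMem_support_iff.mp h, zero_mul]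

theorem natDegree_add_natDegree_le_natDegree_sMul {p q : K[X]} (hp : p ≠ 0) (hq : q ≠ 0) :
    p.natDegree + q.natDegree ≤ (sMul σ p q).natDegree := by
  apply le_natDegree_of_ne_zero
  rw [coeff_sMul_natDegree_add_natDegree]
  exact mul_ne_zero (leadingCoeff_ne_zero.mpr hp)
    ((σ ^ p.natDegree).map_ne_zero_iff.mpr (leadingCoeff_ne_zero.mpr hq))

variable {σ}

theorem natDegree_eq_zero_of_sMul_C_eq_sMul {f q : K[X]} {d : K} (hf : f ≠ 0)
    (h : sMul σ f (C d) = sMul σ q f) : q.natDegree = 0 := by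
  rcases eq_or_ne q 0 with rfl | hq
  · exact natDegree_zero
  · have hlower := natDegree_add_natDegree_le_natDegree_sMul σ hq hf
    have hupper := natDegree_sMul_C_le σ f d
    rw [h] at hupper
    lia

theorem sMul_C_eq_C_mul_iff {f : K[X]} {d : K} :
    sMul σ f (C d) = C ((σ ^ f.natDegree) d) * f ↔
      ∀ i < f.natDegree, (σ ^ f.natDegree) d * f.coeff i = f.coeff i * (σ ^ i) d := by
  simp only [Polynomial.ext_iff, coeff_sMul_C, coeff_C_mul]
  refine ⟨fun h i _ => (h i).symm, fun h i => ?_⟩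
  rcases lt_trichotomy i f.natDegree with hi | rfl | hi
  · exact (h i hi).symm
  · exact mul_comm _ _
  · rw [coeff_eq_zero_of_natDegree_lt hi, zero_mul, mul_zero]

theorem eq_C_of_sMul_C_eq_sMul {f q : K[X]} {d : K} (hf : f ≠ 0)
    (h : sMul σ f (C d) = sMul σ q f) : q = C ((σ ^ f.natDegree) d) := by
  obtain ⟨c, rfl⟩ := natDegree_eq_zero.mp (natDegree_eq_zero_of_sMul_C_eq_sMul hf h)
  have hlead : f.leadingCoeff * (σ ^ f.natDegree) d = f.leadingCoeff * c := by
    rw [leadingCoeff, ← coeff_sMul_C, h, sMul_C_left, coeff_C_mul, mul_comm]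
  rw [mul_left_cancel₀ (leadingCoeff_ne_zero.mpr hf) hlead]

theorem exists_sMul_C_eq_sMul_iff {f : K[X]} (hf : f ≠ 0) {d : K} :
    (∃ q, sMul σ f (C d) = sMul σ q f) ↔ sMul σ f (C d) = C ((σ ^ f.natDegree) d) * f := by
  rw [← sMul_C_left σ]
  refine ⟨?_, fun h => ⟨_, h⟩⟩
  rintro ⟨q, hq⟩
  rwa [← eq_C_of_sMul_C_eq_sMul hf hq]

end SkewMultiplication

section MonicPolynomial

variable {R : Type*} [Ring R] (a : ℕ → R) (m : ℕ)

theorem natDegree_X_pow_sub_sum_range [Nontrivial R] :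
    (X ^ m - ∑ i ∈ Finset.range m, C (a i) * X ^ i).natDegree = m := by
  have degree_sum_lt :
      (∑ i ∈ Finset.range m, C (a i) * X ^ i).degree < (X ^ m : R[X]).degree := by
    rw [Finset.sum_range, degree_X_pow]
    exact degree_sum_fin_lt fun i : Fin m => a i
  rw [natDegree_eq_of_degree_eq (degree_sub_eq_left_of_degree_lt degree_sum_lt), natDegree_X_pow]

variable {m}

theorem coeff_X_pow_sub_sum_range_of_lt {n : ℕ} (hn : n < m) :
    (X ^ m - ∑ i ∈ Finset.range m, C (a i) * X ^ i).coeff n = -a n := by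
  simp [coeff_X_pow, hn, hn.ne]

end MonicPolynomial

theorem mem_rightNucleus_iff_general {K : Type} [Field K] (σ : K ≃+* K) {f : K[X]}
    (hf : 0 < f.natDegree) (d : K) :
    InEigenring σ f (C d) ↔
      ∀ i < f.natDegree, (σ ^ f.natDegree) d * f.coeff i = f.coeff i * (σ ^ i) d := by
  have hdeg : (C d).degree < f.degree :=
    degree_C_le.trans_lt (natDegree_pos_iff_degree_pos.mp hf)
  rw [InEigenring, and_iff_right hdeg, exists_sMul_C_eq_sMul_iff (ne_zero_of_natDegree_gt hf),
    sMul_C_eq_C_mul_iff]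

/-- Theorem 2.2: let `f(t) = t^m - Σ_{i<m} a_i t^i ∈ K[t;σ]` be monic of degree
`m ≥ 2` and not right invariant. Then `d ∈ K` lies in the right nucleus of the Petit
algebra `S_f` if and only if `σ^m(d) a_i = a_i σ^i(d)` for all `i < m`. -/
theorem mem_rightNucleus_iff {K : Type} [Field K] (σ : K ≃+* K) (m : ℕ) (hm : 2 ≤ m)
    (a : ℕ → K) (f : K[X]) (hf : f = X ^ m - ∑ i ∈ Finset.range m, C (a i) * X ^ i)
    (hri : ¬ RightInvariant σ f) (d : K) :
    InEigenring σ f (C d) ↔ ∀ i < m, (σ ^ m) d * a i = a i * (σ ^ i) d := by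
  subst hf
  rw [mem_rightNucleus_iff_general σ (by rw [natDegree_X_pow_sub_sum_range]; lia),
    natDegree_X_pow_sub_sum_range]
  exact forall₂_congr fun i hi => by
    rw [coeff_X_pow_sub_sum_range_of_lt a hi, mul_neg, neg_mul, neg_inj]
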